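/- Let R be a commutative ring. The maps Loc({R_f : f ∈ J}) ↦ √⟨J⟩ (the radical of the ideal generated by J) and I ↦ Loc({R_f : f ∈ I}) are mutually inverse, inclusion-preserving order isomorphisms between the poset of localizing subcategories of D(R) generated by sets of localizations of R and the frame of radical ideals of R. Moreover, this isomorphism restricts to an isomorphism of distributive lattices between the localizing subcategories generated by finitely many localizations of R and the lattice of radicals of finitely generated ideals of R. -/

import Mathlib

open CategoryTheory CategoryTheory.Limits CategoryTheory.Pretriangulated ZeroObject

universe w w' v u

section TriangulatedDefs

variable {T : Type u} [Category.{v} T] [Preadditive T] [HasZeroObject T]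
  [HasShift T ℤ] [∀ n : ℤ, (shiftFunctor T n).Additive] [Pretriangulated T]

/-- A localizing subcategory of a (pre)triangulated category, encoded as a set of
objects: it is closed under isomorphisms, contains the zero object, is stable
under shifts, closed under cones of distinguished triangles (hence a full
triangulated subcategory), and closed under arbitrary small coproducts
(phrased via colimit cofans, so that no global existence of coproducts
is needed). -/
structure IsLocalizingSub (S : Set T) : Prop where
  zero_mem : (0 : T) ∈ S
  mem_of_iso : ∀ {x y : T}, (x ≅ y) → x ∈ S → y ∈ S
  shift_mem : ∀ (n : ℤ) {x : T}, x ∈ S → x⟦n⟧ ∈ S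
  cone_mem : ∀ (Tr : Triangle T), Tr ∈ distinguishedTriangles →
    Tr.obj₁ ∈ S → Tr.obj₂ ∈ S → Tr.obj₃ ∈ S
  coprod_mem : ∀ {ι : Type w} (f : ι → T) (c : Cofan f), IsColimit c →
    (∀ i, f i ∈ S) → c.pt ∈ S

/-- A colocalizing subcategory: as `IsLocalizingSub` but with products instead
of coproducts. -/
structure IsColocalizingSub (S : Set T) : Prop where
  zero_mem : (0 : T) ∈ S
  mem_of_iso : ∀ {x y : T}, (x ≅ y) → x ∈ S → y ∈ S
  shift_mem : ∀ (n : ℤ) {x : T}, x ∈ S → x⟦n⟧ ∈ S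
  cone_mem : ∀ (Tr : Triangle T), Tr ∈ distinguishedTriangles →
    Tr.obj₁ ∈ S → Tr.obj₂ ∈ S → Tr.obj₃ ∈ S
  prod_mem : ∀ {ι : Type w} (f : ι → T) (c : Fan f), IsLimit c →
    (∀ i, f i ∈ S) → c.pt ∈ S

/-- `Loc S`: the smallest localizing subcategory containing the set of
objects `S` (the intersection of all localizing subcategories containing it). -/
def Loc (S : Set T) : Set T :=
  ⋂₀ {L : Set T | IsLocalizingSub.{w} L ∧ S ⊆ L}

/-- The right orthogonal of a set of objects. -/
def rightOrth (C : Set T) : Set T :=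
  {x : T | ∀ ⦃c : T⦄, c ∈ C → ∀ (g : c ⟶ x), g = 0}

end TriangulatedDefs

section CompactDefs

variable {T : Type u} [Category.{v} T] [Preadditive T]

/-- The canonical comparison map `⨁ᵢ Hom(x, fᵢ) →+ Hom(x, ∐ f)` associated to a
cofan `c` on a family `f`. -/
noncomputable def cofanHomComparison {ι : Type w} (x : T) (f : ι → T) (c : Cofan f) :
    (Π₀ i, (x ⟶ f i)) →+ (x ⟶ c.pt) :=
  letI := Classical.decEq ι
  DFinsupp.sumAddHom (fun i => AddMonoidHom.mk' (fun φ => φ ≫ c.inj i)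
    (fun φ ψ => Preadditive.add_comp _ _ _ φ ψ (c.inj i)))

/-- An object `x` is compact if `Hom(x, -)` commutes with arbitrary small
coproducts, i.e. for every colimit cofan on a family `f`, the canonical map
`⨁ᵢ Hom(x, fᵢ) → Hom(x, ∐ f)` is bijective. -/
def IsCompactObj (x : T) : Prop :=
  ∀ ⦃ι : Type w⦄ (f : ι → T) (c : Cofan f), IsColimit c →
    Function.Bijective (cofanHomComparison x f c)

end CompactDefs

section DR

variable (R : Type u) [CommRing R] [HasDerivedCategory.{w'} (ModuleCat.{u} R)]

/-- The `R`-module `M`, regarded as an object of the derived category `D(R)`,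
as a complex concentrated in degree `0`. -/
noncomputable def smod (M : ModuleCat.{u} R) : DerivedCategory (ModuleCat.{u} R) :=
  (DerivedCategory.singleFunctor (ModuleCat.{u} R) 0).obj M

end DR
section Statement15

variable (R : Type u) [CommRing R] [HasDerivedCategory.{w'} (ModuleCat.{u} R)]

/-- The localizing subcategory of `D(R)` generated by the localizations `R_f`
for `f` in a subset `S ⊆ R`. -/
noncomputable def locS (S : Set R) : Set (DerivedCategory (ModuleCat.{u} R)) :=
  Loc.{u} {x | ∃ f ∈ S, x = smod R (ModuleCat.of R (Localization.Away f))}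

end Statement15

section Coprod
set_option linter.unusedSectionVars false
variable (R : Type u) [CommRing R] [HasDerivedCategory.{w'} (ModuleCat.{u} R)]

noncomputable def copF (J : Type u) : ModuleCat.{u} R ⥤ ModuleCat.{u} R :=
  Functor.const (Discrete J) ⋙ colim

instance (J : Type u) : (copF R J).Additive := by
  constructor
  intro X Y f g
  refine colimit.hom_ext (fun j => ?_)
  refine Eq.trans ?_ (Preadditive.comp_add _ _ _ _ _ _).symm
  simp [copF]
  rfl

instance (J : Type u) : PreservesFiniteLimits (copF R J) := by
  unfold copF
  infer_instance

instance (J : Type u) : PreservesFiniteColimits (copF R J) := by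
  unfold copF
  infer_instance

noncomputable def copι (J : Type u) (j : J) (M : ModuleCat.{u} R) : M ⟶ (copF R J).obj M :=
  colimit.ι ((Functor.const (Discrete J)).obj M) ⟨j⟩

def copNat {J : Type u} {M N : ModuleCat.{u} R} (f : J → (M ⟶ N)) :
    (Functor.const (Discrete J)).obj M ⟶ (Functor.const (Discrete J)).obj N where
  app j := f j.as
  naturality := by
    rintro ⟨i⟩ ⟨j⟩ ⟨⟨h⟩⟩
    obtain rfl : i = j := h
    simp

noncomputable def copDesc {J : Type u} {M N : ModuleCat.{u} R} (f : J → (M ⟶ N)) :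
    (copF R J).obj M ⟶ N :=
  colimit.desc ((Functor.const (Discrete J)).obj M) ⟨N, copNat R f⟩

lemma copι_desc {J : Type u} {M N : ModuleCat.{u} R} (f : J → (M ⟶ N)) (j : J) :
    copι R J j M ≫ copDesc R f = f j := by
  exact colimit.ι_desc _ _

lemma cop_hom_ext {J : Type u} {M N : ModuleCat.{u} R} {f g : (copF R J).obj M ⟶ N}
    (h : ∀ j, copι R J j M ≫ f = copι R J j M ≫ g) : f = g :=
  colimit.hom_ext (fun j => h j.as)

lemma copι_map (J : Type u) (j : J) {M N : ModuleCat.{u} R} (f : M ⟶ N) :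
    copι R J j M ≫ (copF R J).map f = f ≫ copι R J j N := by
  simp [copι, copF]

noncomputable abbrev copC (J : Type u) : CochainComplex (ModuleCat.{u} R) ℤ ⥤ CochainComplex (ModuleCat.{u} R) ℤ :=
  (copF R J).mapHomologicalComplex _

noncomputable def copιC (J : Type u) (j : J) (M : CochainComplex (ModuleCat.{u} R) ℤ) :
    M ⟶ (copC R J).obj M where
  f n := copι R J j (M.X n)
  comm' := by intros; exact copι_map R J j _

lemma copDescC_aux {J : Type u} {M N : CochainComplex (ModuleCat.{u} R) ℤ} (f : J → (M ⟶ N))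
    (n m : ℤ) (j : J) :
    copι R J j (M.X n) ≫ copDesc R (fun j => (f j).f n) ≫ N.d n m =
      copι R J j (M.X n) ≫ (copF R J).map (M.d n m) ≫ copDesc R (fun j => (f j).f m) := by
  rw [← Category.assoc, copι_desc, ← Category.assoc, copι_map, Category.assoc, copι_desc,
    HomologicalComplex.Hom.comm]

noncomputable def copDescC {J : Type u} {M N : CochainComplex (ModuleCat.{u} R) ℤ} (f : J → (M ⟶ N)) :
    (copC R J).obj M ⟶ N where
  f n := copDesc R (fun j => (f j).f n)
  comm' := by intros; exact cop_hom_ext R (fun j => copDescC_aux R f _ _ j)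

lemma copιC_desc {J : Type u} {M N : CochainComplex (ModuleCat.{u} R) ℤ} (f : J → (M ⟶ N)) (j : J) :
    copιC R J j M ≫ copDescC R f = f j := by
  ext1 n; exact copι_desc R _ j

lemma copC_hom_ext {J : Type u} {M N : CochainComplex (ModuleCat.{u} R) ℤ} {f g : (copC R J).obj M ⟶ N}
    (h : ∀ j, copιC R J j M ≫ f = copιC R J j M ≫ g) : f = g := by
  ext1 n
  exact cop_hom_ext R (fun j => HomologicalComplex.congr_hom (h j) n)

lemma copιC_map (J : Type u) (j : J) {M N : CochainComplex (ModuleCat.{u} R) ℤ} (f : M ⟶ N) :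
    copιC R J j M ≫ (copC R J).map f = f ≫ copιC R J j N := by
  ext1 n; exact copι_map R J j _

open DerivedCategory

lemma Q_map_surj_of_KProj (P K : CochainComplex (ModuleCat.{u} R) ℤ) [P.IsKProjective]
    (φ : Q.obj P ⟶ Q.obj K) : ∃ f : P ⟶ K, Q.map f = φ := by
  obtain ⟨g, hg⟩ := (CochainComplex.IsKProjective.Qh_map_bijective P
    ((HomotopyCategory.quotient _ _).obj K)).surjective φ
  obtain ⟨f, rfl⟩ := (HomotopyCategory.quotient _ _).map_surjective g
  exact ⟨f, hg⟩

lemma Q_map_zero_of_KProj (P K : CochainComplex (ModuleCat.{u} R) ℤ) [P.IsKProjective]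
    (f : P ⟶ K) (h : Q.map f = 0) : Nonempty (Homotopy f 0) := by
  refine ⟨HomotopyCategory.homotopyOfEq _ _ ?_⟩
  apply (CochainComplex.IsKProjective.Qh_map_bijective P
    ((HomotopyCategory.quotient _ _).obj K)).injective
  rw [Functor.map_zero, Functor.map_zero]
  exact h

lemma cop_inj (J : Type u) (P K : CochainComplex (ModuleCat.{u} R) ℤ) [P.IsKProjective]
    (φ : Q.obj ((copC R J).obj P) ⟶ Q.obj K) (h : ∀ j, Q.map (copιC R J j P) ≫ φ = 0) : φ = 0 := by
  obtain ⟨K', g, s, hs, rfl⟩ := left_fac φ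
  have h1 : ∀ j, Nonempty (Homotopy (𝟙 P ≫ (copιC R J j P ≫ g)) 0) := by
    intro j
    apply Q_map_zero_of_KProj
    have := h j
    rw [← Category.assoc] at this
    have h2 : (Q.map (copιC R J j P) ≫ Q.map g) = 0 := by
      rw [← cancel_mono (inv (Q.map s)), this, zero_comp]
    simpa using h2
  have H := fun j => (h1 j).some
  have hg : g = (copC R J).map (HomologicalComplex.homotopyCofiber.inr (𝟙 P)) ≫
      copDescC R (fun j => HomologicalComplex.homotopyCofiber.desc (𝟙 P) _ (H j)) := by
    apply copC_hom_ext
    intro j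
    rw [← Category.assoc, copιC_map, Category.assoc, copιC_desc]
    simp
  have h0 : Homotopy (HomologicalComplex.homotopyCofiber.inr (𝟙 P)) 0 :=
    (Homotopy.ofEq (by simp)).trans
      (HomologicalComplex.homotopyCofiber.inrCompHomotopy (𝟙 P) (fun j => ⟨j - 1, by simp⟩))
  have h3 : Q.map ((copC R J).map (HomologicalComplex.homotopyCofiber.inr (𝟙 P))) = 0 := by
    rw [Q_map_eq_of_homotopy _ ((copF R J).mapHomotopy h0)]
    simp
  rw [hg, Functor.map_comp, h3]
  simp

noncomputable def copCofanIsColimit (J : Type u) (P : CochainComplex (ModuleCat.{u} R) ℤ) [P.IsKProjective] :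
    IsColimit (Cofan.mk (f := fun _ : J => Q.obj P) (Q.obj ((copC R J).obj P))
      (fun j => Q.map (copιC R J j P))) := by
  apply Nonempty.some
  have hex : ∀ (Y : DerivedCategory (ModuleCat.{u} R)) (f : J → (Q.obj P ⟶ Y)),
      ∃ φ : Q.obj ((copC R J).obj P) ⟶ Y, ∀ j, Q.map (copιC R J j P) ≫ φ = f j := by
    intro Y f
    let e := Q.objObjPreimageIso Y
    choose g hg using fun j => Q_map_surj_of_KProj R P _ (f j ≫ e.inv)
    refine ⟨Q.map (copDescC R g) ≫ e.hom, fun j => ?_⟩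
    rw [← Category.assoc, ← Functor.map_comp, copιC_desc, hg]
    simp
  have hun : ∀ (Y : DerivedCategory (ModuleCat.{u} R)) (φ ψ : Q.obj ((copC R J).obj P) ⟶ Y),
      (∀ j, Q.map (copιC R J j P) ≫ φ = Q.map (copιC R J j P) ≫ ψ) → φ = ψ := by
    intro Y φ ψ h
    let e := Q.objObjPreimageIso Y
    rw [← sub_eq_zero, ← cancel_mono e.inv, zero_comp]
    apply cop_inj
    intro j
    rw [← Category.assoc, Preadditive.comp_sub, h j]
    simp
  choose d hd using hex
  exact ⟨Cofan.IsColimit.mk _ (fun s => d s.pt s.inj) (fun s j => hd s.pt s.inj j)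
    (fun s m hm => hun _ _ _ (fun j => (hm j).trans (hd s.pt s.inj j).symm))⟩

lemma smod_cop_mem {L : Set (DerivedCategory (ModuleCat.{u} R))} (hL : IsLocalizingSub.{u} L)
    (J : Type u) (A : ModuleCat.{u} R) (hA : smod R A ∈ L) : smod R ((copF R J).obj A) ∈ L := by
  let P := (projectiveResolution A)
  have e1 : Q.obj P.cochainComplex ≅ smod R A :=
    asIso (Q.map P.π') ≪≫ ((singleFunctorIsoCompQ _ 0).app A).symm
  have e2 : Q.obj ((copC R J).obj P.cochainComplex) ≅ smod R ((copF R J).obj A) :=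
    asIso (Q.map ((copC R J).map P.π')) ≪≫
      Q.mapIso (((HomologicalComplex.singleMapHomologicalComplex (copF R J) _ 0)).app A) ≪≫
      ((singleFunctorIsoCompQ _ 0).app _).symm
  exact hL.mem_of_iso e2 (hL.coprod_mem _ _ (copCofanIsColimit R J P.cochainComplex)
    (fun _ => hL.mem_of_iso e1.symm hA))
end Coprod

section LocAlg
set_option linter.unusedSectionVars false
open DerivedCategory

variable (R : Type u) [CommRing R] [HasDerivedCategory.{w'} (ModuleCat.{u} R)]

lemma isLocalizingSub_Loc (S : Set (DerivedCategory (ModuleCat.{u} R))) :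
    IsLocalizingSub.{u} (Loc.{u} S) where
  zero_mem := fun _ hL => hL.1.zero_mem
  mem_of_iso e hx := fun L hL => hL.1.mem_of_iso e (hx L hL)
  shift_mem n _ hx := fun L hL => hL.1.shift_mem n (hx L hL)
  cone_mem T hT h1 h2 := fun L hL => hL.1.cone_mem T hT (h1 L hL) (h2 L hL)
  coprod_mem f c hc h := fun L hL => hL.1.coprod_mem f c hc (fun i => h i L hL)

variable {L : Set (DerivedCategory (ModuleCat.{u} R))} (hL : IsLocalizingSub.{u} L)
include hL

lemma mem_obj₁ (T : Triangle (DerivedCategory (ModuleCat.{u} R))) (hT : T ∈ distinguishedTriangles)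
    (h2 : T.obj₂ ∈ L) (h3 : T.obj₃ ∈ L) : T.obj₁ ∈ L := by
  have h := hL.cone_mem _ (rot_of_distTriang T hT) h2 h3
  exact hL.mem_of_iso ((shiftEquiv _ (1 : ℤ)).unitIso.symm.app T.obj₁) (hL.shift_mem (-1) h)

lemma mem_obj₂ (T : Triangle (DerivedCategory (ModuleCat.{u} R))) (hT : T ∈ distinguishedTriangles)
    (h1 : T.obj₁ ∈ L) (h3 : T.obj₃ ∈ L) : T.obj₂ ∈ L :=
  mem_obj₁ R hL _ (rot_of_distTriang T hT) h3 (hL.shift_mem 1 h1)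

omit hL in
lemma shortExact_of {M N P : Type u} [AddCommGroup M] [AddCommGroup N] [AddCommGroup P]
    [Module R M] [Module R N] [Module R P] (f : M →ₗ[R] N) (g : N →ₗ[R] P)
    (hf : Function.Injective f) (hg : Function.Surjective g) (h : Function.Exact f g) :
    (ShortComplex.mk (ModuleCat.ofHom f) (ModuleCat.ofHom g)
      (by ext x; exact h.apply_apply_eq_zero x)).ShortExact where
  exact := by
    rw [ShortComplex.ShortExact.moduleCat_exact_iff_function_exact]
    exact h
  mono_f := (ModuleCat.mono_iff_injective _).2 hf
  epi_g := (ModuleCat.epi_iff_surjective _).2 hg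

lemma ses₁ {M N P : Type u} [AddCommGroup M] [AddCommGroup N] [AddCommGroup P]
    [Module R M] [Module R N] [Module R P] (f : M →ₗ[R] N) (g : N →ₗ[R] P)
    (hf : Function.Injective f) (hg : Function.Surjective g) (h : Function.Exact f g)
    (hN : smod R (.of R N) ∈ L) (hP : smod R (.of R P) ∈ L) : smod R (.of R M) ∈ L :=
  mem_obj₁ R hL _ (shortExact_of R f g hf hg h).singleTriangle_distinguished hN hP

lemma ses₂ {M N P : Type u} [AddCommGroup M] [AddCommGroup N] [AddCommGroup P]
    [Module R M] [Module R N] [Module R P] (f : M →ₗ[R] N) (g : N →ₗ[R] P)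
    (hf : Function.Injective f) (hg : Function.Surjective g) (h : Function.Exact f g)
    (hM : smod R (.of R M) ∈ L) (hP : smod R (.of R P) ∈ L) : smod R (.of R N) ∈ L :=
  mem_obj₂ R hL _ (shortExact_of R f g hf hg h).singleTriangle_distinguished hM hP

lemma ses₃ {M N P : Type u} [AddCommGroup M] [AddCommGroup N] [AddCommGroup P]
    [Module R M] [Module R N] [Module R P] (f : M →ₗ[R] N) (g : N →ₗ[R] P)
    (hf : Function.Injective f) (hg : Function.Surjective g) (h : Function.Exact f g)
    (hM : smod R (.of R M) ∈ L) (hN : smod R (.of R N) ∈ L) : smod R (.of R P) ∈ L :=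
  hL.cone_mem _ (shortExact_of R f g hf hg h).singleTriangle_distinguished hM hN

lemma mem_of_equiv {M N : Type u} [AddCommGroup M] [AddCommGroup N]
    [Module R M] [Module R N] (e : M ≃ₗ[R] N) (hM : smod R (.of R M) ∈ L) :
    smod R (.of R N) ∈ L :=
  hL.mem_of_iso ((singleFunctor (ModuleCat.{u} R) 0).mapIso e.toModuleIso) hM

lemma mem_prod {M N : Type u} [AddCommGroup M] [AddCommGroup N]
    [Module R M] [Module R N] (hM : smod R (.of R M) ∈ L) (hN : smod R (.of R N) ∈ L) :
    smod R (.of R (M × N)) ∈ L :=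
  ses₂ R hL (LinearMap.inl R M N) (LinearMap.snd R M N) LinearMap.inl_injective
    LinearMap.snd_surjective (Function.Exact.inl_snd) hM hN

omit hL in
lemma poly_inj {A : Type u} [CommRing A] (r : A) :
    Function.Injective (fun p : Polynomial A => (Polynomial.C r * Polynomial.X - 1) * p) := by
  intro p q h
  have h' : (Polynomial.C r * Polynomial.X - 1) * (p - q) = 0 := by
    rw [mul_sub, sub_eq_zero]; exact h
  rw [← sub_eq_zero]
  set s := p - q
  ext n
  have h2 : ∀ n, s.coeff n = (Polynomial.C r * (s * Polynomial.X)).coeff n := by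
    intro n
    have : Polynomial.C r * (s * Polynomial.X) = s := by linear_combination h'
    rw [this]
  induction n with
  | zero => rw [h2]; simp
  | succ n ih => rw [h2, Polynomial.coeff_C_mul, Polynomial.coeff_mul_X, ih]; simp

omit hL in
lemma exists_polySum {A N : Type u} [CommRing A] [Algebra R A] [AddCommGroup N] [Module R N]
    (φ : ℕ → (A →ₗ[R] N)) : ∃ ψ : Polynomial A →ₗ[R] N,
      ∀ n a, ψ (Polynomial.monomial n a) = φ n a := by
  let ψ0 : Polynomial A →+ N :=
    { toFun := fun p => p.sum (fun n a => φ n a)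
      map_zero' := Polynomial.sum_zero_index _
      map_add' := fun p q => Polynomial.sum_add_index _ _ _ (fun i => map_zero _)
        (fun i a b => map_add _ a b) }
  have h0 : ∀ n a, ψ0 (Polynomial.monomial n a) = φ n a := fun n a =>
    Polynomial.sum_monomial_index _ _ (map_zero _)
  refine ⟨{ ψ0 with map_smul' := fun r p => ?_ }, h0⟩
  change ψ0 (r • p) = r • ψ0 p
  induction p using Polynomial.induction_on' with
  | add p q hp hq => rw [smul_add, map_add, hp, hq, map_add, smul_add]
  | monomial n a => rw [Polynomial.smul_monomial, h0, h0, map_smul]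

lemma mem_poly {A : Type u} [CommRing A] [Algebra R A] (hA : smod R (.of R A) ∈ L) :
    smod R (.of R (Polynomial A)) ∈ L := by
  have h := smod_cop_mem R hL (ULift.{u} ℕ) (.of R A) hA
  obtain ⟨ψ, hψ⟩ := exists_polySum R (A := A) (fun n => (copι R (ULift.{u} ℕ) ⟨n⟩ (.of R A)).hom)
  let mon : ULift.{u} ℕ → (ModuleCat.of R A ⟶ ModuleCat.of R (Polynomial A)) := fun n =>
    ModuleCat.ofHom ((Polynomial.monomial (R := A) n.down).restrictScalars R)
  have hmon : ∀ n a, (copDesc R mon).hom ((copι R (ULift.{u} ℕ) ⟨n⟩ (.of R A)).hom a) =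
      Polynomial.monomial n a := fun n a =>
    congrArg (fun f => f.hom a) (copι_desc R mon ⟨n⟩)
  let e1 : (copF R (ULift.{u} ℕ)).obj (.of R A) ≅ .of R (Polynomial A) :=
    { hom := copDesc R mon
      inv := ModuleCat.ofHom ψ
      hom_inv_id := by
        refine cop_hom_ext R (fun ⟨n⟩ => ModuleCat.hom_ext (LinearMap.ext fun a => ?_))
        change ψ ((copDesc R mon).hom ((copι R (ULift.{u} ℕ) ⟨n⟩ (.of R A)).hom a)) =
          (copι R (ULift.{u} ℕ) ⟨n⟩ (.of R A)).hom a
        exact (congrArg ψ (hmon n a)).trans (hψ n a)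
      inv_hom_id := by
        refine ModuleCat.hom_ext (LinearMap.ext fun p => ?_)
        change (copDesc R mon).hom (ψ p) = p
        induction p using Polynomial.induction_on' with
        | add p q hp hq => rw [map_add, map_add, hp, hq]
        | monomial n a => rw [hψ]; exact hmon n a }
  exact hL.mem_of_iso ((singleFunctor (ModuleCat.{u} R) 0).mapIso e1) h

lemma mem_away {A B : Type u} [CommRing A] [Algebra R A] [CommRing B] [Algebra R B] [Algebra A B]
    [IsScalarTower R A B] (r : A)
    [IsLocalization.Away r B] (hA : smod R (.of R A) ∈ L) : smod R (.of R B) ∈ L := by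
  have hP := mem_poly R hL hA
  let q := Polynomial.C r * Polynomial.X - 1
  have h1 : smod R (.of R (AdjoinRoot q)) ∈ L := by
    refine ses₃ R hL (LinearMap.mulLeft R q) ((AdjoinRoot.mkₐ q).toLinearMap.restrictScalars R)
      (poly_inj r) AdjoinRoot.mk_surjective ?_ hP hP
    intro x
    have := AdjoinRoot.mk_eq_zero (f := q) (g := x)
    refine this.trans ?_
    constructor
    · rintro ⟨y, rfl⟩; exact ⟨y, rfl⟩
    · rintro ⟨y, rfl⟩; exact ⟨y, rfl⟩
  refine mem_of_equiv R hL ?_ h1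
  exact (((Localization.awayEquivAdjoin r).symm.trans
    (IsLocalization.algEquiv (Submonoid.powers r) (Localization.Away r) B)).toLinearEquiv.restrictScalars R)

/-- Mayer-Vietoris -/
lemma mem_mv {A B C D : Type u} [CommRing A] [Algebra R A] [CommRing B] [Algebra R B] [Algebra A B]
    [CommRing C] [Algebra R C] [Algebra A C] [CommRing D] [Algebra R D] [Algebra A D]
    [IsScalarTower R A B] [IsScalarTower R A C] [IsScalarTower R A D]
    (x y : A) (hxy : IsCoprime x y)
    [IsLocalization.Away x B] [IsLocalization.Away y C] [IsLocalization.Away (x * y) D]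
    (hB : smod R (.of R B) ∈ L) (hC : smod R (.of R C) ∈ L) (hD : smod R (.of R D) ∈ L) :
    smod R (.of R A) ∈ L := by
  have hu : IsUnit (algebraMap A D x * algebraMap A D y) := by
    rw [← map_mul]; exact IsLocalization.Away.algebraMap_isUnit _
  have hux : IsUnit (algebraMap A D x) := isUnit_of_mul_isUnit_left hu
  have huy : IsUnit (algebraMap A D y) := isUnit_of_mul_isUnit_right hu
  let f : A →ₗ[A] B × C := (Algebra.linearMap A B).prod (Algebra.linearMap A C)
  let b0 : B →+* D := IsLocalization.Away.lift x hux
  let c0 : C →+* D := IsLocalization.Away.lift y huy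
  have hb0 : ∀ a, b0 (algebraMap A B a) = algebraMap A D a := IsLocalization.Away.lift_eq x hux
  have hc0 : ∀ a, c0 (algebraMap A C a) = algebraMap A D a := IsLocalization.Away.lift_eq y huy
  let b : B →ₐ[A] D := { b0 with commutes' := hb0 }
  let c : C →ₐ[A] D := { c0 with commutes' := hc0 }
  have hb : ∀ a, b (algebraMap A B a) = algebraMap A D a := hb0
  have hc : ∀ a, c (algebraMap A C a) = algebraMap A D a := hc0
  let g : B × C →ₗ[A] D := b.toLinearMap.coprod (-c.toLinearMap)
  have hfe : ∀ a, f a = (algebraMap A B a, algebraMap A C a) := fun _ => rfl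
  have hge : ∀ p, g p = b p.1 - c p.2 := fun p => by simp [g, sub_eq_add_neg]
  have hxB : ∀ n, IsUnit (algebraMap A B x ^ n) := fun n =>
    (IsLocalization.Away.algebraMap_isUnit x).pow n
  have hyC : ∀ n, IsUnit (algebraMap A C y ^ n) := fun n =>
    (IsLocalization.Away.algebraMap_isUnit y).pow n
  refine ses₁ R hL (f.restrictScalars R) (g.restrictScalars R) ?_ ?_ ?_ (mem_prod R hL hB hC) hD
  · rw [injective_iff_map_eq_zero]
    intro a ha
    have ha' : f a = 0 := ha
    rw [hfe, Prod.mk_eq_zero] at ha'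
    obtain ⟨⟨_, n, rfl⟩, hn⟩ := (IsLocalization.map_eq_zero_iff (Submonoid.powers x) B a).1 ha'.1
    obtain ⟨⟨_, m, rfl⟩, hm⟩ := (IsLocalization.map_eq_zero_iff (Submonoid.powers y) C a).1 ha'.2
    obtain ⟨u, v, huv⟩ := hxy.pow (m := n) (n := m)
    simp only at hn hm
    linear_combination (-a) * huv + u * hn + v * hm
  · intro d
    obtain ⟨n, r, hr⟩ := IsLocalization.Away.surj (x * y) d
    obtain ⟨u, v, huv⟩ := hxy.pow (m := n) (n := n)
    obtain ⟨s, hs⟩ := (hxB n).exists_right_inv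
    obtain ⟨t, ht⟩ := (hyC n).exists_right_inv
    refine ⟨(algebraMap A B (r * v) * s, - (algebraMap A C (r * u) * t)), ?_⟩
    refine (hge _).trans ?_
    have e1 := congrArg b hs
    have e2 := congrArg c ht
    have e3 := congrArg (algebraMap A D) huv
    apply (hu.pow n).mul_left_cancel
    simp only [map_mul, map_pow, map_one, map_neg, map_add, hb, hc] at *
    linear_combination (algebraMap A D y ^ n * algebraMap A D r * algebraMap A D v) * e1 + (algebraMap A D x ^ n * algebraMap A D r * algebraMap A D u) * e2 + algebraMap A D r * e3 - hr
  · intro p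
    obtain ⟨p, q⟩ := p
    refine Iff.trans (b := g (p, q) = 0) Iff.rfl ?_
    rw [hge, sub_eq_zero]
    constructor
    · intro h
      dsimp only at h
      obtain ⟨n, r, hr⟩ := IsLocalization.Away.surj x p
      obtain ⟨m, s, hs⟩ := IsLocalization.Away.surj y q
      have e1 := congrArg b hr
      have e2 := congrArg c hs
      simp only [map_mul, map_pow, hb, hc] at e1 e2
      have e3 : algebraMap A D (y ^ m * r) = algebraMap A D (x ^ n * s) := by
        simp only [map_mul, map_pow]
        rw [← e1, ← e2, h]; ring
      obtain ⟨⟨_, k, rfl⟩, hk⟩ := (IsLocalization.eq_iff_exists (Submonoid.powers (x * y)) D).1 e3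
      dsimp only at hk
      obtain ⟨u, v, huv⟩ := hxy.pow (m := n + k) (n := m + k)
      refine ⟨u * x ^ k * r + v * y ^ k * s, ?_⟩
      refine (hfe _).trans (Prod.ext ?_ ?_)
      · dsimp only
        apply (hxB (n + k)).mul_left_cancel
        have e4 := congrArg (algebraMap A B) hk
        have e5 := congrArg (algebraMap A B) huv
        simp only [map_mul, map_pow, map_add, map_one] at *
        linear_combination (-algebraMap A B v) * e4 + (algebraMap A B x ^ k * algebraMap A B r) * e5 - algebraMap A B x ^ k * hr
      · dsimp only
        apply (hyC (m + k)).mul_left_cancel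
        have e4 := congrArg (algebraMap A C) hk
        have e5 := congrArg (algebraMap A C) huv
        simp only [map_mul, map_pow, map_add, map_one] at *
        linear_combination (algebraMap A C u) * e4 + (algebraMap A C y ^ k * algebraMap A C s) * e5 - algebraMap A C y ^ k * hs
    · rintro ⟨a, ha⟩
      have ha' := (hfe a).symm.trans ha
      rw [Prod.mk.injEq] at ha'
      dsimp only
      rw [← ha'.1, ← ha'.2, hb, hc]

end LocAlg

section Ideals
set_option linter.unusedSectionVars false

variable (R : Type u) [CommRing R] [HasDerivedCategory.{w'} (ModuleCat.{u} R)]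
variable {L : Set (DerivedCategory (ModuleCat.{u} R))} (hL : IsLocalizingSub.{u} L)
include hL

lemma U_zero : smod R (.of R (Localization.Away (0 : R))) ∈ L := by
  have hs : Subsingleton (Localization.Away (0 : R)) :=
    IsLocalization.subsingleton (M := Submonoid.powers (0 : R)) ⟨1, by simp⟩
  have hz : IsZero (ModuleCat.of R (Localization.Away (0 : R))) :=
    ModuleCat.isZero_of_subsingleton _
  have hz' : IsZero (smod R (.of R (Localization.Away (0 : R)))) :=
    Functor.map_isZero (DerivedCategory.singleFunctor (ModuleCat.{u} R) 0) hz
  exact hL.mem_of_iso ((isZero_zero _).iso hz') hL.zero_mem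

lemma U_iso {f : R} (B : Type u) [CommRing B] [Algebra R B] [IsLocalization.Away f B] :
    smod R (.of R (Localization.Away f)) ∈ L ↔ smod R (.of R B) ∈ L :=
  ⟨mem_of_equiv R hL
    (IsLocalization.algEquiv (Submonoid.powers f) (Localization.Away f) B).toLinearEquiv,
   mem_of_equiv R hL
    (IsLocalization.algEquiv (Submonoid.powers f) (Localization.Away f) B).symm.toLinearEquiv⟩

omit hL in
lemma away_tower (f r : R) : IsLocalization.Away (f * r)
    (Localization.Away (algebraMap R (Localization.Away f) r)) :=
  IsLocalization.Away.mul' (Localization.Away f) _ f r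

lemma U_mul {f : R} (r : R) (hf : smod R (.of R (Localization.Away f)) ∈ L) :
    smod R (.of R (Localization.Away (f * r))) ∈ L := by
  have := away_tower R f r
  rw [U_iso R hL (Localization.Away (algebraMap R (Localization.Away f) r))]
  exact mem_away R hL (algebraMap R (Localization.Away f) r) hf

lemma U_add {f g : R} (hf : smod R (.of R (Localization.Away f)) ∈ L)
    (hg : smod R (.of R (Localization.Away g)) ∈ L) :
    smod R (.of R (Localization.Away (f + g))) ∈ L := by
  let A := Localization.Away (f + g)
  have key : ∀ r : R, smod R (.of R (Localization.Away r)) ∈ L →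
      smod R (.of R (Localization.Away (algebraMap R A r))) ∈ L := by
    intro r hr
    have := away_tower R (f + g) r
    rw [← U_iso R hL (f := (f + g) * r), mul_comm]
    exact U_mul R hL _ hr
  have hc : IsCoprime (algebraMap R A f) (algebraMap R A g) := by
    have hu : IsUnit (algebraMap R A (f + g)) := IsLocalization.Away.algebraMap_isUnit _
    obtain ⟨s, hs⟩ := hu.exists_left_inv
    refine ⟨s, s, ?_⟩
    rw [← mul_add, ← map_add, hs]
  have hD := key (f * g) (U_mul R hL g hf)
  rw [map_mul] at hD
  exact mem_mv R hL (algebraMap R A f) (algebraMap R A g) hc (key f hf) (key g hg) hD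

lemma U_pow {f : R} (n : ℕ) (hf : smod R (.of R (Localization.Away (f ^ n))) ∈ L) :
    smod R (.of R (Localization.Away f)) ∈ L := by
  have h1 := U_mul R hL f hf
  have : IsLocalization.Away (f ^ n * f) (Localization.Away f) := by
    refine IsLocalization.Away.mul_of_isUnit' _ _ ?_
    rw [map_pow]
    exact IsLocalization.Away.algebraMap_pow_isUnit f n
  rwa [U_iso R hL (Localization.Away f)] at h1

lemma U_rad (S : Set R) (hS : ∀ f ∈ S, smod R (.of R (Localization.Away f)) ∈ L) {f : R}
    (hf : f ∈ (Ideal.span S).radical) : smod R (.of R (Localization.Away f)) ∈ L := by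
  let I : Ideal R :=
    { carrier := {f | smod R (.of R (Localization.Away f)) ∈ L}
      zero_mem' := U_zero R hL
      add_mem' := fun ha hb => U_add R hL ha hb
      smul_mem' := fun c x hx => by
        change smod R (.of R (Localization.Away (c * x))) ∈ L
        rw [mul_comm]
        exact U_mul R hL c hx }
  have h1 : Ideal.span S ≤ I := Ideal.span_le.2 hS
  obtain ⟨n, hn⟩ := hf
  exact U_pow R hL n (h1 hn)

omit hL in
lemma mem_locS {S : Set R} {f : R} (hf : f ∈ (Ideal.span S).radical) :
    smod R (.of R (Localization.Away f)) ∈ locS R S :=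
  U_rad R (isLocalizingSub_Loc R _) S (fun f hf => by
    intro M hM
    exact hM.2 ⟨f, hf, rfl⟩) hf

omit hL in
lemma locS_le {S S' : Set R} (h : S ⊆ (Ideal.span S').radical) : locS R S ⊆ locS R S' := by
  refine Set.sInter_subset_of_mem ⟨isLocalizingSub_Loc R _, ?_⟩
  rintro _ ⟨f, hf, rfl⟩
  exact mem_locS R (h hf)

end Ideals

section Orth
set_option linter.unusedSectionVars false
open DerivedCategory

variable (R : Type u) [CommRing R] [HasDerivedCategory.{w'} (ModuleCat.{u} R)]

lemma orth_loc (K : DerivedCategory (ModuleCat.{u} R)) :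
    IsLocalizingSub.{u} {X : DerivedCategory (ModuleCat.{u} R) |
      ∀ (n : ℤ) (φ : X ⟶ K⟦n⟧), φ = 0} where
  zero_mem := fun n φ => (isZero_zero _).eq_of_src _ _
  mem_of_iso := fun e hx n φ => by
    rw [← cancel_epi e.hom, hx n (e.hom ≫ φ), comp_zero]
  shift_mem := fun m x hx n φ => by
    obtain ⟨ψ, hψ⟩ := (shiftFunctor (DerivedCategory (ModuleCat.{u} R)) m).map_surjective
      (φ ≫ ((shiftFunctorAdd' _ (n - m) m n (by omega)).app K).hom)
    rw [hx _ ψ, Functor.map_zero] at hψ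
    exact (cancel_mono ((shiftFunctorAdd' _ (n - m) m n (by omega)).app K).hom).1
      (hψ.symm.trans zero_comp.symm)
  cone_mem := fun T hT h1 h2 n φ => by
    obtain ⟨g, hg⟩ := T.yoneda_exact₃ hT φ (h2 n _)
    obtain ⟨ψ, hψ⟩ := (shiftFunctor (DerivedCategory (ModuleCat.{u} R)) (1 : ℤ)).map_surjective
      (g ≫ ((shiftFunctorAdd' _ (n - 1) 1 n (by omega)).app K).hom)
    rw [h1 _ ψ, Functor.map_zero] at hψ
    have : g = 0 := (cancel_mono ((shiftFunctorAdd' _ (n - 1) 1 n (by omega)).app K).hom).1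
      (hψ.symm.trans zero_comp.symm)
    rw [hg, this, comp_zero]
  coprod_mem := fun f c hc h n φ => by
    refine Cofan.IsColimit.hom_ext hc _ _ (fun i => ?_)
    rw [h i n (c.inj i ≫ φ), comp_zero]

lemma lin_aux {X Y : DerivedCategory (ModuleCat.{u} R)} (t : X ⟶ X) (φ : X ⟶ Y) (g : R)
    (ht : t ≫ (g • 𝟙 X) = 𝟙 X) (hg : g • φ = 0) : φ = 0 := by
  rw [← Category.id_comp φ, ← ht, Category.assoc, Linear.smul_comp, Category.id_comp, hg,
    comp_zero]

lemma orth_gen (K : ModuleCat.{u} R) (g : R) (hK : ∀ k : K, g • k = 0) (n : ℤ)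
    (φ : smod R (.of R (Localization.Away g)) ⟶ (smod R K)⟦n⟧) : φ = 0 := by
  let A := ModuleCat.of R (Localization.Away g)
  have hu : IsUnit (algebraMap R (Localization.Away g) g) :=
    IsLocalization.Away.algebraMap_isUnit g
  obtain ⟨s, hs⟩ := hu.exists_left_inv
  let t : A ⟶ A := ModuleCat.ofHom (LinearMap.mulLeft R s)
  have ht : t ≫ (g • 𝟙 A) = 𝟙 A := by
    refine ModuleCat.hom_ext (LinearMap.ext fun a => ?_)
    change g • (s * a : Localization.Away g) = a
    rw [Algebra.smul_def, ← mul_assoc, mul_comm _ s, hs, one_mul]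
  have h0 : (g • 𝟙 K : K ⟶ K) = 0 := by
    refine ModuleCat.hom_ext (LinearMap.ext fun a => ?_)
    exact hK a
  have ht' := congrArg ((singleFunctor (ModuleCat.{u} R) 0).map) ht
  rw [Functor.map_comp, Functor.map_smul, CategoryTheory.Functor.map_id] at ht'
  have h0' := congrArg (fun f => (shiftFunctor (DerivedCategory (ModuleCat.{u} R)) n).map
    ((singleFunctor (ModuleCat.{u} R) 0).map f)) h0
  simp only [Functor.map_smul, CategoryTheory.Functor.map_id, Functor.map_zero] at h0'
  have hg : g • φ = 0 := by
    have : φ ≫ (g • 𝟙 ((smod R K)⟦n⟧)) = 0 := by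
      refine Eq.trans ?_ (comp_zero (f := φ))
      exact congrArg (fun z => φ ≫ z) h0'
    rwa [Linear.comp_smul, Category.comp_id] at this
  exact lin_aux R ((singleFunctor (ModuleCat.{u} R) 0).map t) φ g ht' hg

lemma mem_radical_of_mem_locS {S : Set R} {f : R}
    (hf : smod R (.of R (Localization.Away f)) ∈ locS R S) : f ∈ (Ideal.span S).radical := by
  let A := Localization.Away f
  let I : Ideal A := (Ideal.span S).map (algebraMap R A)
  let K := ModuleCat.of R (A ⧸ I)
  have h1 := hf _ ⟨orth_loc R (smod R K), by
    rintro _ ⟨g, hg, rfl⟩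
    intro n φ
    refine orth_gen R K g ?_ n φ
    intro k
    obtain ⟨a, rfl⟩ := Ideal.Quotient.mk_surjective k
    change Ideal.Quotient.mk I (g • a) = 0
    rw [Ideal.Quotient.eq_zero_iff_mem, Algebra.smul_def]
    exact I.mul_mem_right _ (Ideal.mem_map_of_mem _ (Ideal.subset_span hg))⟩
  let q : ModuleCat.of R A ⟶ K := ModuleCat.ofHom (Ideal.Quotient.mkₐ R I).toLinearMap
  have h2 := h1 0 ((singleFunctor (ModuleCat.{u} R) 0).map q ≫
    ((shiftFunctorZero (DerivedCategory (ModuleCat.{u} R)) ℤ).app (smod R K)).inv)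
  have h3 : (singleFunctor (ModuleCat.{u} R) 0).map q = 0 :=
    (cancel_mono ((shiftFunctorZero (DerivedCategory (ModuleCat.{u} R)) ℤ).app (smod R K)).inv).1
      (h2.trans zero_comp.symm)
  have h4 : q = 0 := (singleFunctor (ModuleCat.{u} R) 0).map_injective
    (h3.trans (Functor.map_zero _ _ _).symm)
  have h5 : Ideal.Quotient.mk I 1 = 0 := congrArg (fun z => z.hom (1 : A)) h4
  rw [Ideal.Quotient.eq_zero_iff_mem] at h5
  obtain ⟨⟨⟨a, ha⟩, ⟨_, n, rfl⟩⟩, h6⟩ :=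
    (IsLocalization.mem_map_algebraMap_iff (Submonoid.powers f) A).1 h5
  dsimp only at h6
  rw [one_mul] at h6
  obtain ⟨⟨_, m, rfl⟩, h7⟩ := (IsLocalization.eq_iff_exists (Submonoid.powers f) A).1 h6
  dsimp only at h7
  refine ⟨m + n, ?_⟩
  rw [pow_add, h7]
  exact Ideal.mul_mem_left _ _ ha

lemma locS_le_iff (S S' : Set R) :
    locS R S ⊆ locS R S' ↔ (Ideal.span S).radical ≤ (Ideal.span S').radical := by
  constructor
  · intro h
    rw [(Ideal.radical_isRadical _).radical_le_iff, Ideal.span_le]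
    intro f hf
    exact mem_radical_of_mem_locS R (h (mem_locS R (Ideal.le_radical (Ideal.subset_span hf))))
  · intro h
    exact locS_le R (fun f hf => h (Ideal.le_radical (Ideal.subset_span hf)))

lemma locS_eq_iff (S S' : Set R) :
    locS R S = locS R S' ↔ (Ideal.span S).radical = (Ideal.span S').radical := by
  rw [Set.Subset.antisymm_iff, locS_le_iff, locS_le_iff, le_antisymm_iff]

end Orth

section Statement15

variable (R : Type u) [CommRing R] [HasDerivedCategory.{w'} (ModuleCat.{u} R)]

/-- Theorem: `Loc({R_f : f ∈ J}) ↦ √⟨J⟩` and `I ↦ Loc({R_f : f ∈ I})` are mutually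
inverse, inclusion-preserving order isomorphisms between the poset of localizing
subcategories of `D(R)` generated by sets of localizations of `R` and the frame
of radical ideals of `R`; moreover this isomorphism restricts to the
subcategories generated by finitely many localizations and the radicals of
finitely generated ideals. -/
theorem rfgLoc_orderIso_radicalIdeals :
    ∃ e : {L : Set (DerivedCategory (ModuleCat.{u} R)) //
            ∃ S : Set R, L = locS R S} ≃o
          {I : Ideal R // I.radical = I},
      (∀ S : Set R, (e ⟨locS R S, ⟨S, rfl⟩⟩).1 = (Ideal.span S).radical) ∧
      (∀ (I : Ideal R) (hI : I.radical = I),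
        (e.symm ⟨I, hI⟩).1 = locS R (I : Set R)) ∧
      (∀ (L : Set (DerivedCategory (ModuleCat.{u} R)))
          (hL : ∃ S : Set R, L = locS R S),
        ((∃ S : Set R, S.Finite ∧ L = locS R S) ↔
          ∃ J : Ideal R, J.FG ∧ (e ⟨L, hL⟩).1 = J.radical)) := by
  let F : {L : Set (DerivedCategory (ModuleCat.{u} R)) // ∃ S : Set R, L = locS R S} →
      {I : Ideal R // I.radical = I} :=
    fun L => ⟨(Ideal.span L.2.choose).radical, Ideal.radical_idem _⟩
  let G : {I : Ideal R // I.radical = I} →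
      {L : Set (DerivedCategory (ModuleCat.{u} R)) // ∃ S : Set R, L = locS R S} :=
    fun I => ⟨locS R (I.1 : Set R), _, rfl⟩
  have hF : ∀ (L : {L : Set (DerivedCategory (ModuleCat.{u} R)) // ∃ S : Set R, L = locS R S})
      (S : Set R), L.1 = locS R S → (F L).1 = (Ideal.span S).radical := by
    intro L S h
    exact (locS_eq_iff R _ _).1 (L.2.choose_spec.symm.trans h)
  let e : {L : Set (DerivedCategory (ModuleCat.{u} R)) // ∃ S : Set R, L = locS R S} ≃o
      {I : Ideal R // I.radical = I} :=
    { toFun := F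
      invFun := G
      left_inv := by
        rintro ⟨_, S, rfl⟩
        apply Subtype.ext
        change locS R ((F ⟨locS R S, S, rfl⟩).1 : Set R) = locS R S
        rw [hF ⟨locS R S, S, rfl⟩ S rfl, locS_eq_iff, Ideal.span_eq, Ideal.radical_idem]
      right_inv := by
        rintro ⟨I, hI⟩
        apply Subtype.ext
        rw [hF _ (I : Set R) rfl, Ideal.span_eq, hI]
      map_rel_iff' := by
        rintro ⟨_, S, rfl⟩ ⟨_, S', rfl⟩
        change (F ⟨locS R S, S, rfl⟩).1 ≤ (F ⟨locS R S', S', rfl⟩).1 ↔ locS R S ⊆ locS R S'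
        rw [hF _ S rfl, hF _ S' rfl, locS_le_iff] }
  refine ⟨e, fun S => hF _ S rfl, fun I hI => rfl, fun L hL => ⟨?_, ?_⟩⟩
  · rintro ⟨S, hS, rfl⟩
    exact ⟨Ideal.span S, Submodule.fg_span hS, hF _ S rfl⟩
  · rintro ⟨J, ⟨t, ht⟩, hJ⟩
    refine ⟨t, t.finite_toSet, ?_⟩
    obtain ⟨S, rfl⟩ := hL
    rw [locS_eq_iff, ← hF ⟨locS R S, S, rfl⟩ S rfl]
    refine hJ.trans ?_
    rw [← ht]

end Statement15
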